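/- Let n ≥ 3 and let U be a positive harmonic function on ℝⁿ ∖ {0} with U(x) → 1 as ‖x‖ → ∞. Then there exists b ≥ 0 such that U(x) = 1 + b·‖x‖^{2-n} for all x ≠ 0. -/

import Mathlib

open Filter MeasureTheory

/-- A function is harmonic on an open subset of `ℝⁿ` if it is smooth there and its
Euclidean Laplacian (the sum of its pure second partial derivatives) vanishes
identically. -/
def HarmonicOnSet {n : ℕ} (f : EuclideanSpace ℝ (Fin n) → ℝ)
    (Ω : Set (EuclideanSpace ℝ (Fin n))) : Prop :=
  ContDiffOn ℝ (⊤ : ℕ∞) f Ω ∧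
    ∀ x ∈ Ω, ∑ i : Fin n,
      fderiv ℝ (fun y => fderiv ℝ f y (EuclideanSpace.single i (1:ℝ))) x
        (EuclideanSpace.single i (1:ℝ)) = 0

/-!
The mean value property, taken against the weight `(1 - ‖y‖²)⁺` instead of over spheres, gives
Harnack's inequality and hence the minimum principle. Let `f` be bounded below with limit `ℓ` at
infinity. Comparison with `ℓ` plus a multiple of the Newton kernel `G x = ‖x‖ ^ (2 - n)`, outside
ever smaller spheres, shows that `ℓ ≤ f`. Take `b` to be the infimum of `(f - ℓ) / G`, so that
`w = f - ℓ - b G` is nonnegative and tends to `0`. By dilation, Harnack's inequality holds on all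
spheres around the origin with one constant `C`, and comparing multiples of `w` and `G` outside a
sphere carries it over to `w y / G y ≤ C * (w x / G x)` for any two points. As `inf (w / G) = 0`,
the function `w` vanishes.
-/

section

open Bornology InnerProductSpace Laplacian Metric Module Set Topology

section Calculus

theorem fderiv_comp_add_smul {E F : Type*} [NormedAddCommGroup E] [NormedSpace ℝ E]
    [NormedAddCommGroup F] [NormedSpace ℝ F] (f : E → F) (a : E) (c : ℝ) :
    fderiv ℝ (fun y => f (a + c • y)) = c • fun y => fderiv ℝ f (a + c • y) := by
  ext1 y
  rw [fderiv_comp_smul (f := fun z => f (a + z)), fderiv_comp_add_left, Pi.smul_apply]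

theorem fderiv_fderiv_apply_of_contDiffAt {E : Type*} [NormedAddCommGroup E] [NormedSpace ℝ E]
    {f : E → ℝ} {x : E} (hf : ContDiffAt ℝ 2 f x) (v w : E) :
    fderiv ℝ (fun y => fderiv ℝ f y v) x w = fderiv ℝ (fderiv ℝ f) x w v := by
  have hf' : DifferentiableAt ℝ (fderiv ℝ f) x :=
    (hf.fderiv_right (m := 1) (by norm_num)).differentiableAt one_ne_zero
  simp [fderiv_clm_apply hf' (differentiableAt_const v)]

theorem hasFDerivAt_norm_rpow_of_ne_zero {E : Type*} [NormedAddCommGroup E]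
    [InnerProductSpace ℝ E] (p : ℝ) {x : E} (hx : x ≠ 0) :
    HasFDerivAt (fun y : E => ‖y‖ ^ p) ((p * ‖x‖ ^ (p - 2)) • innerSL ℝ x) x := by
  have hsq (y : E) (q : ℝ) : (‖y‖ ^ 2) ^ (q / 2) = ‖y‖ ^ q := by
    rw [← Real.rpow_natCast_mul (norm_nonneg y)]
    congr 1
    push_cast
    ring
  have h := (hasStrictFDerivAt_norm_sq x).hasFDerivAt.rpow_const (p := p / 2)
    (Or.inl (pow_ne_zero 2 (norm_ne_zero_iff.2 hx)))
  simp only [hsq, show p / 2 - 1 = (p - 2) / 2 by ring] at h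
  refine h.congr_fderiv ?_
  ext v
  simp only [smul_apply, smul_eq_mul, nsmul_eq_mul]
  ring

theorem exists_contDiff_eventuallyEq_of_contDiffAt {E : Type*} [NormedAddCommGroup E]
    [NormedSpace ℝ E] [FiniteDimensional ℝ E] {n : ℕ} {f : E → ℝ} {K : Set E} (hK : IsClosed K)
    (hf : ∀ x ∈ K, ContDiffAt ℝ n f x) : ∃ g, ContDiff ℝ n g ∧ ∀ x ∈ K, g =ᶠ[𝓝 x] f := by
  let V := {x | ContDiffAt ℝ n f x}
  have hV : IsOpen V := isOpen_iff_mem_nhds.2 fun x (hx : ContDiffAt ℝ n f x) =>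
    hx.eventually (by simp)
  obtain ⟨χ, hχ0, hχ1, -⟩ := exists_contMDiffMap_zero_one_nhds_of_isClosed (n := n)
    (modelWithCornersSelf ℝ E) hV.isClosed_compl hK
    (disjoint_compl_left_iff_subset.2 hf)
  refine ⟨fun x => χ x * f x, contDiff_iff_contDiffAt.2 fun x => ?_, fun x hx => ?_⟩
  · by_cases hx : x ∈ V
    · exact χ.contMDiff.contDiff.contDiffAt.mul hx
    · refine (contDiffAt_const (c := (0 : ℝ))).congr_of_eventuallyEq ?_
      filter_upwards [hχ0.filter_mono (nhds_le_nhdsSet hx)] with y hy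
      rw [hy, zero_mul]
  · filter_upwards [hχ1.filter_mono (nhds_le_nhdsSet hx)] with y hy
    rw [hy, one_mul]

theorem hasDerivAt_integral_mul_of_hasCompactSupport {X : Type*} [TopologicalSpace X]
    [SecondCountableTopology X] [MeasurableSpace X] [OpensMeasurableSpace X] {μ : Measure X}
    [IsFiniteMeasureOnCompacts μ] {φ : X → ℝ} {F F' : ℝ → X → ℝ} (hφ : Continuous φ)
    (hφc : HasCompactSupport φ) (hF : ∀ t, Continuous (F t))
    (hF' : Continuous (Function.uncurry F'))
    (hderiv : ∀ t y, HasDerivAt (F · y) (F' t y) t) (t : ℝ) :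
    HasDerivAt (fun t => ∫ y, φ y * F t y ∂μ) (∫ y, φ y * F' t y ∂μ) t := by
  obtain ⟨M, hM⟩ := ((isCompact_closedBall t 1).prod hφc).exists_bound_of_continuousOn
    hF'.continuousOn
  have hF'cont : Continuous (F' t) := by fun_prop
  refine (hasDerivAt_integral_of_dominated_loc_of_deriv_le (F := fun t y => φ y * F t y)
    (F' := fun t y => φ y * F' t y) (bound := fun y => M * ‖φ y‖) (ball_mem_nhds t one_pos)
    (.of_forall fun s => (hφ.mul (hF s)).aestronglyMeasurable)
    ((hφ.mul (hF t)).integrable_of_hasCompactSupport hφc.mul_right)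
    (hφ.mul hF'cont).aestronglyMeasurable (.of_forall fun y s hs => ?_)
    ((hφ.norm.integrable_of_hasCompactSupport hφc.norm).const_mul M)
    (.of_forall fun y s _ => (hderiv s y).const_mul _)).2
  by_cases hy : y ∈ tsupport φ
  · rw [norm_mul, mul_comm]
    exact mul_le_mul_of_nonneg_right (by exact hM (s, y) ⟨ball_subset_closedBall hs, hy⟩)
      (norm_nonneg _)
  · simp [image_eq_zero_of_notMem_tsupport hy]

end Calculus

section BallWeight

/-- The profile `(1 - ‖y‖²)⁺`, against which harmonic functions are averaged over balls. It
replaces the uniform measure on spheres because `ballWeight y • y` is the gradient of the compactly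
supported `C¹` function `-(ballWeight y)² / 4`, so that integration by parts needs no boundary. -/
noncomputable def ballWeight {E : Type*} [NormedAddCommGroup E] (y : E) : ℝ := max (1 - ‖y‖ ^ 2) 0

section Normed

variable {E : Type*} [NormedAddCommGroup E]

theorem continuous_ballWeight : Continuous (ballWeight : E → ℝ) := by
  unfold ballWeight
  fun_prop

theorem ballWeight_nonneg (y : E) : 0 ≤ ballWeight y := le_max_right _ _

theorem ballWeight_of_one_le_norm {y : E} (hy : 1 ≤ ‖y‖) : ballWeight y = 0 :=
  max_eq_right (by nlinarith)

theorem ballWeight_smul_sub_of_le_dist [NormedSpace ℝ E] {R : ℝ} (hR : 0 < R) {x z : E}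
    (hz : R ≤ dist z x) : ballWeight (R⁻¹ • (z - x)) = 0 := by
  refine ballWeight_of_one_le_norm ?_
  rwa [norm_smul_of_nonneg (inv_nonneg.2 hR.le), ← dist_eq_norm, ← div_eq_inv_mul, one_le_div hR]

theorem hasCompactSupport_ballWeight [ProperSpace E] : HasCompactSupport (ballWeight : E → ℝ) :=
  .intro (isCompact_closedBall 0 1) fun y hy =>
    ballWeight_of_one_le_norm (by simpa using (not_le.1 (mt mem_closedBall_zero_iff.2 hy)).le)

theorem ballWeight_le_three_mul [NormedSpace ℝ E] {R : ℝ} (hR : 0 < R) {x y : E}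
    (hxy : dist x y ≤ R / 2) (z : E) :
    ballWeight (R⁻¹ • (z - x)) ≤ 3 * ballWeight ((2 * R)⁻¹ • (z - y)) := by
  rcases le_total R (dist z x) with hz | hz
  · rw [ballWeight_smul_sub_of_le_dist hR hz]
    exact mul_nonneg zero_le_three (ballWeight_nonneg _)
  · have hsmall : ‖(2 * R)⁻¹ • (z - y)‖ ≤ 3 / 4 := by
      rw [norm_smul_of_nonneg (by positivity), ← dist_eq_norm, ← div_eq_inv_mul,
        div_le_iff₀ (by positivity)]
      linarith [dist_triangle z x y]
    calc
      ballWeight (R⁻¹ • (z - x)) ≤ 1 := max_le (sub_le_self _ (sq_nonneg _)) zero_le_one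
      _ ≤ 3 * (1 - ‖(2 * R)⁻¹ • (z - y)‖ ^ 2) := by nlinarith [norm_nonneg ((2 * R)⁻¹ • (z - y))]
      _ ≤ _ := mul_le_mul_of_nonneg_left (le_max_left _ _) zero_le_three

end Normed

theorem hasDerivAt_max_zero_sq (s : ℝ) :
    HasDerivAt (fun t : ℝ => max t 0 ^ 2) (2 * max s 0) s := by
  have hderiv (t : ℝ) (ht : t ≠ 0) : HasDerivAt (fun t : ℝ => max t 0 ^ 2) (2 * max t 0) t := by
    rcases ht.lt_or_gt with ht | ht
    · rw [max_eq_right ht.le, mul_zero]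
      refine (hasDerivAt_const t (0 : ℝ)).congr_of_eventuallyEq ?_
      filter_upwards [Iio_mem_nhds ht] with u hu
      simp [max_eq_right (mem_Iio.1 hu).le]
    · rw [max_eq_left ht.le]
      refine HasDerivAt.congr_of_eventuallyEq (f₁ := fun t : ℝ => max t 0 ^ 2)
        (by simpa using hasDerivAt_pow 2 t) ?_
      filter_upwards [Ioi_mem_nhds ht] with u hu
      simp [max_eq_left (mem_Ioi.1 hu).le]
  exact hasDerivAt_of_hasDerivAt_of_ne' hderiv (by fun_prop) (by fun_prop) s

section Inner

variable {E : Type*} [NormedAddCommGroup E] [InnerProductSpace ℝ E]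

theorem hasFDerivAt_ballWeight_sq (y : E) :
    HasFDerivAt (fun z : E => ballWeight z ^ 2) (-(4 * ballWeight y) • innerSL ℝ y) y := by
  have hsub : HasFDerivAt (fun z : E => 1 - ‖z‖ ^ 2) (-(2 • innerSL ℝ y)) y :=
    (hasStrictFDerivAt_norm_sq y).hasFDerivAt.const_sub 1
  refine ((hasDerivAt_max_zero_sq (1 - ‖y‖ ^ 2)).comp_hasFDerivAt y hsub).congr_fderiv ?_
  ext v
  simp [ballWeight]
  ring

theorem contDiff_ballWeight_sq : ContDiff ℝ 1 fun y : E => ballWeight y ^ 2 := by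
  have hfderiv : fderiv ℝ (fun y : E => ballWeight y ^ 2) =
      fun y => -(4 * ballWeight y) • innerSL ℝ y :=
    funext fun y => (hasFDerivAt_ballWeight_sq y).fderiv
  refine contDiff_one_iff_fderiv.2
    ⟨fun y => (hasFDerivAt_ballWeight_sq y).differentiableAt, ?_⟩
  rw [hfderiv]
  exact (continuous_ballWeight.const_mul 4).neg.smul (innerSL ℝ).continuous

theorem integral_ballWeight_pos [FiniteDimensional ℝ E] [MeasurableSpace E] [BorelSpace E] :
    0 < ∫ y : E, ballWeight y :=
  continuous_ballWeight.integral_pos_of_hasCompactSupport_nonneg_nonzero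
    hasCompactSupport_ballWeight ballWeight_nonneg (x := 0) (by simp [ballWeight])

end Inner

end BallWeight

variable {E : Type*} [NormedAddCommGroup E] [InnerProductSpace ℝ E] [FiniteDimensional ℝ E]

theorem laplacian_eq_sum_fderiv_fderiv {ι : Type*} [Fintype ι] (b : OrthonormalBasis ι ℝ E)
    (f : E → ℝ) (x : E) : (Δ f) x = ∑ i, fderiv ℝ (fderiv ℝ f) x (b i) (b i) := by
  simp [laplacian_eq_iteratedFDeriv_orthonormalBasis f b, iteratedFDeriv_two_apply]

theorem HarmonicOnSet.harmonicOnNhd {n : ℕ} {f : EuclideanSpace ℝ (Fin n) → ℝ}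
    {Ω : Set (EuclideanSpace ℝ (Fin n))} (hf : HarmonicOnSet f Ω) (hΩ : IsOpen Ω) :
    HarmonicOnNhd f Ω := by
  have hcont (x) (hx : x ∈ Ω) : ContDiffAt ℝ 2 f x :=
    (hf.1.contDiffAt (hΩ.mem_nhds hx)).of_le (WithTop.coe_le_coe.2 le_top)
  refine fun x hx => ⟨hcont x hx, ?_⟩
  filter_upwards [hΩ.mem_nhds hx] with y hy
  rw [laplacian_eq_sum_fderiv_fderiv (EuclideanSpace.basisFun (Fin n) ℝ), Pi.zero_apply,
    ← hf.2 y hy]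
  simp [fderiv_fderiv_apply_of_contDiffAt (hcont y hy)]

theorem laplacian_comp_add_smul (f : E → ℝ) (a : E) (c : ℝ) (x : E) :
    (Δ fun y => f (a + c • y)) x = c ^ 2 * (Δ f) (a + c • x) := by
  have h : fderiv ℝ (fderiv ℝ fun y => f (a + c • y)) x =
      c • c • fderiv ℝ (fderiv ℝ f) (a + c • x) := by
    rw [fderiv_comp_add_smul, fderiv_const_smul_field (f := fun y => fderiv ℝ f (a + c • y)),
      Pi.smul_apply, fderiv_comp_add_smul, Pi.smul_apply]
  simp only [laplacian_eq_sum_fderiv_fderiv (stdOrthonormalBasis ℝ E), h, smul_apply, smul_smul,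
    Finset.mul_sum, smul_eq_mul, sq]

theorem harmonicAt_comp_const_smul {f : E → ℝ} {c : ℝ} {x : E} (hf : HarmonicAt f (c • x)) :
    HarmonicAt (fun y => f (c • y)) x := by
  have hsmul : ContDiff ℝ 2 fun y : E => c • y := contDiff_const_smul c
  refine ⟨hf.1.comp x hsmul.contDiffAt, ?_⟩
  filter_upwards [hsmul.continuous.continuousAt.eventually hf.2] with y hy
  simpa [hy] using laplacian_comp_add_smul f 0 c y

theorem laplacian_norm_rpow (p : ℝ) {x : E} (hx : x ≠ 0) :
    (Δ fun y : E => ‖y‖ ^ p) x = p * (p + finrank ℝ E - 2) * ‖x‖ ^ (p - 2) := by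
  have hfderiv : fderiv ℝ (fun y : E => ‖y‖ ^ p) =ᶠ[𝓝 x]
      fun y => (p * ‖y‖ ^ (p - 2)) • innerSL ℝ y := by
    filter_upwards [isOpen_compl_singleton.mem_nhds hx] with y hy
    exact (hasFDerivAt_norm_rpow_of_ne_zero p hy).fderiv
  have hfderiv₂ : HasFDerivAt (fun y : E => (p * ‖y‖ ^ (p - 2)) • innerSL ℝ y) _ x :=
    ((hasFDerivAt_norm_rpow_of_ne_zero (p - 2) hx).const_mul p).smul
      (innerSL ℝ : E →L[ℝ] E →L[ℝ] ℝ).hasFDerivAt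
  have hbasis (i) : fderiv ℝ (fderiv ℝ fun y : E => ‖y‖ ^ p) x (stdOrthonormalBasis ℝ E i)
      (stdOrthonormalBasis ℝ E i) = p * ‖x‖ ^ (p - 2) +
        p * (p - 2) * ‖x‖ ^ (p - 4) * inner ℝ x (stdOrthonormalBasis ℝ E i) ^ 2 := by
    rw [hfderiv.fderiv_eq, hfderiv₂.fderiv]
    simp [show p - 2 - 2 = p - 4 by ring, innerSL_apply_apply ℝ]
    ring
  have hpow : ‖x‖ ^ (p - 2) = ‖x‖ ^ (p - 4) * ‖x‖ ^ 2 := by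
    rw [← Real.rpow_add_natCast (norm_ne_zero_iff.2 hx)]
    congr 1
    push_cast
    ring
  simp only [laplacian_eq_sum_fderiv_fderiv (stdOrthonormalBasis ℝ E), hbasis,
    Finset.sum_add_distrib, ← Finset.mul_sum, OrthonormalBasis.sum_sq_inner_left,
    Finset.sum_const, Finset.card_univ, Fintype.card_fin, nsmul_eq_mul, hpow]
  ring

section MeanValue

variable [MeasurableSpace E] [BorelSpace E]

theorem integral_laplacian_mul_eq_neg_integral_fderiv {u ψ : E → ℝ} {g : E → E}
    (hu : ContDiff ℝ 2 u) (hψ : ContDiff ℝ 1 ψ) (hψc : HasCompactSupport ψ)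
    (hg : ∀ y, fderiv ℝ ψ y = innerSL ℝ (g y)) :
    ∫ y, (Δ u) y * ψ y = -∫ y, fderiv ℝ u y (g y) := by
  let b := stdOrthonormalBasis ℝ E
  have hu' : ContDiff ℝ 1 (fderiv ℝ u) := hu.fderiv_right (by norm_num)
  have hdiff (i) : ContDiff ℝ 1 fun y => fderiv ℝ u y (b i) := hu'.clm_apply contDiff_const
  have hdiff' (i) : Continuous fun y => fderiv ℝ (fun z => fderiv ℝ u z (b i)) y (b i) :=
    ((hdiff i).continuous_fderiv one_ne_zero).clm_apply continuous_const
  have hψ' (i) : Continuous fun y => fderiv ℝ ψ y (b i) :=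
    (hψ.continuous_fderiv one_ne_zero).clm_apply continuous_const
  have hψ'c (i) : HasCompactSupport fun y => fderiv ℝ ψ y (b i) := hψc.fderiv_apply (𝕜 := ℝ) (b i)
  have hint₁ (i) : Integrable fun y => fderiv ℝ (fun z => fderiv ℝ u z (b i)) y (b i) * ψ y :=
    ((hdiff' i).mul hψ.continuous).integrable_of_hasCompactSupport hψc.mul_left
  have hint₂ (i) : Integrable fun y => fderiv ℝ u y (b i) * fderiv ℝ ψ y (b i) :=
    ((hdiff i).continuous.mul (hψ' i)).integrable_of_hasCompactSupport (hψ'c i).mul_left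
  have hparts (i) : ∫ y, fderiv ℝ u y (b i) * fderiv ℝ ψ y (b i) =
      -∫ y, fderiv ℝ (fun z => fderiv ℝ u z (b i)) y (b i) * ψ y :=
    integral_mul_fderiv_eq_neg_fderiv_mul_of_integrable (hint₁ i) (hint₂ i)
      (((hdiff i).continuous.mul hψ.continuous).integrable_of_hasCompactSupport hψc.mul_left)
      (fun y _ => (hdiff i).differentiable one_ne_zero y)
      (fun y _ => hψ.differentiable one_ne_zero y)
  have hleft (y : E) : (Δ u) y * ψ y =
      ∑ i, fderiv ℝ (fun z => fderiv ℝ u z (b i)) y (b i) * ψ y := by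
    simp only [laplacian_eq_sum_fderiv_fderiv b, Finset.sum_mul,
      fderiv_fderiv_apply_of_contDiffAt hu.contDiffAt]
  have hright (y : E) : fderiv ℝ u y (g y) =
      ∑ i, fderiv ℝ u y (b i) * fderiv ℝ ψ y (b i) := by
    conv_lhs => rw [← b.sum_repr' (g y)]
    simp [hg, real_inner_comm, mul_comm]
  simp only [hleft, hright]
  rw [integral_finsetSum _ fun i _ => hint₁ i, integral_finsetSum _ fun i _ => hint₂ i]
  simp only [hparts, Finset.sum_neg_distrib, neg_neg]

theorem integral_ballWeight_mul_fderiv_eq_zero {u : E → ℝ} (hu : ContDiff ℝ 2 u)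
    (hΔ : ∀ y, ‖y‖ < 1 → (Δ u) y = 0) : ∫ y : E, ballWeight y * fderiv ℝ u y y = 0 := by
  have hzero (y : E) : (Δ u) y * ballWeight y ^ 2 = 0 := by
    rcases lt_or_ge ‖y‖ 1 with hy | hy
    · rw [hΔ y hy, zero_mul]
    · rw [ballWeight_of_one_le_norm hy, zero_pow two_ne_zero, mul_zero]
  have hgreen := integral_laplacian_mul_eq_neg_integral_fderiv hu contDiff_ballWeight_sq
    (hasCompactSupport_ballWeight.comp_left (g := (· ^ 2)) (zero_pow two_ne_zero))
    (g := fun y => (-4 : ℝ) • ballWeight y • y) fun y => by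
      rw [(hasFDerivAt_ballWeight_sq y).fderiv, smul_smul, map_smul, neg_mul]
  simpa [hzero, integral_neg, integral_const_mul] using hgreen

theorem integral_ballWeight_mul_eq {f : E → ℝ} (hf : ContDiff ℝ 2 f) {x : E} {R : ℝ} (hR : 0 < R)
    (hΔ : ∀ y ∈ closedBall x R, (Δ f) y = 0) :
    ∫ y : E, ballWeight y * f (x + R • y) = f x * ∫ y : E, ballWeight y := by
  have hderiv := hasDerivAt_integral_mul_of_hasCompactSupport (μ := (volume : Measure E))
    (F := fun t y => f (x + t • y)) (F' := fun t y => fderiv ℝ f (x + t • y) y)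
    continuous_ballWeight hasCompactSupport_ballWeight
    (fun t => hf.continuous.comp (by fun_prop))
    (((hf.continuous_fderiv two_ne_zero).comp (by fun_prop)).clm_apply continuous_snd)
    fun t y => by
      have hline : HasDerivAt (fun s : ℝ => x + s • y) y t := by
        simpa using ((hasDerivAt_id t).smul_const y).const_add x
      exact (hf.differentiable two_ne_zero _).hasFDerivAt.comp_hasDerivAt t hline
  have hzero (t : ℝ) (ht : t ∈ Ioo 0 R) :
      ∫ y : E, ballWeight y * fderiv ℝ f (x + t • y) y = 0 := by
    have h := integral_ballWeight_mul_fderiv_eq_zero (u := fun y => f (x + t • y))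
      (hf.comp (contDiff_const.add (contDiff_const_smul t))) fun y hy => by
        rw [laplacian_comp_add_smul, hΔ _ ?_, mul_zero]
        rw [mem_closedBall_iff_norm, add_sub_cancel_left, norm_smul_of_nonneg ht.1.le]
        nlinarith [ht.1, ht.2]
    simpa [fderiv_comp_add_smul, mul_left_comm _ t, integral_const_mul, ht.1.ne'] using h
  obtain ⟨t, ht, hslope⟩ := exists_hasDerivAt_eq_slope _ _ hR
    (fun t _ => (hderiv t).continuousAt.continuousWithinAt) fun t _ => hderiv t
  rw [hzero t ht, eq_comm, div_eq_zero_iff, or_iff_left (sub_pos.2 hR).ne', sub_eq_zero] at hslope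
  simpa [integral_mul_const, mul_comm (f x)] using hslope

end MeanValue

section ChainOfComparisons

variable {X : Type*} [TopologicalSpace X] {𝓕 : Set (X → ℝ)} {Ω : Set X}

theorem exists_pos_forall_le_mul_of_isPreconnected (hΩ : IsPreconnected Ω)
    (hloc : ∀ x ∈ Ω, ∃ C > 0, ∀ᶠ y in 𝓝[Ω] x, ∀ f ∈ 𝓕, f x ≤ C * f y ∧ f y ≤ C * f x)
    {x y : X} (hx : x ∈ Ω) (hy : y ∈ Ω) : ∃ C > 0, ∀ f ∈ 𝓕, f x ≤ C * f y := by
  refine hΩ.induction₂' (fun x y => ∃ C > 0, ∀ f ∈ 𝓕, f x ≤ C * f y) (fun x hx => ?_) ?_ hx hy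
  · obtain ⟨C, hC, h⟩ := hloc x hx
    filter_upwards [h] with y hy
    exact ⟨⟨C, hC, fun f hf => (hy f hf).1⟩, ⟨C, hC, fun f hf => (hy f hf).2⟩⟩
  · rintro x y z - - - ⟨C, hC, hxy⟩ ⟨C', hC', hyz⟩
    refine ⟨C * C', mul_pos hC hC', fun f hf => ?_⟩
    calc
      f x ≤ C * f y := hxy f hf
      _ ≤ C * (C' * f z) := mul_le_mul_of_nonneg_left (hyz f hf) hC.le
      _ = C * C' * f z := (mul_assoc _ _ _).symm

theorem exists_pos_forall_le_mul_of_isCompact {K : Set X} (hΩ : IsPreconnected Ω)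
    (hloc : ∀ x ∈ Ω, ∃ C > 0, ∀ᶠ y in 𝓝[Ω] x, ∀ f ∈ 𝓕, f x ≤ C * f y ∧ f y ≤ C * f x)
    (hK : IsCompact K) (hKΩ : K ⊆ Ω) :
    ∃ C > 0, ∀ f ∈ 𝓕, ∀ x ∈ K, ∀ y ∈ K, 0 ≤ f y → f x ≤ C * f y := by
  suffices ∃ C > 0, ∀ f ∈ 𝓕, ∀ p ∈ K ×ˢ K, 0 ≤ f p.2 → f p.1 ≤ C * f p.2 by
    obtain ⟨C, hC, h⟩ := this
    exact ⟨C, hC, fun f hf x hx y hy => h f hf (x, y) ⟨hx, hy⟩⟩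
  refine (hK.prod hK).induction_on
    (p := fun s => ∃ C > 0, ∀ f ∈ 𝓕, ∀ p ∈ s, 0 ≤ f p.2 → f p.1 ≤ C * f p.2)
    ⟨1, one_pos, by simp⟩ ?_ ?_ ?_
  · rintro s t hst ⟨C, hC, h⟩
    exact ⟨C, hC, fun f hf p hp => h f hf p (hst hp)⟩
  · rintro s t ⟨C, hC, hs⟩ ⟨C', -, ht⟩
    refine ⟨max C C', lt_max_of_lt_left hC, fun f hf p hp hp0 => ?_⟩
    rcases hp with hp | hp
    · exact (hs f hf p hp hp0).trans (mul_le_mul_of_nonneg_right (le_max_left _ _) hp0)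
    · exact (ht f hf p hp hp0).trans (mul_le_mul_of_nonneg_right (le_max_right _ _) hp0)
  · rintro ⟨x, y⟩ ⟨hx, hy⟩
    obtain ⟨Cx, hCx, hxloc⟩ := hloc x (hKΩ hx)
    obtain ⟨Cy, hCy, hyloc⟩ := hloc y (hKΩ hy)
    obtain ⟨C, hC, hxy⟩ := exists_pos_forall_le_mul_of_isPreconnected hΩ hloc (hKΩ hx) (hKΩ hy)
    have hnhds := (hxloc.filter_mono (nhdsWithin_mono x hKΩ)).prod_mk
      (hyloc.filter_mono (nhdsWithin_mono y hKΩ))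
    rw [← nhdsWithin_prod_eq] at hnhds
    refine ⟨_, hnhds, Cx * (C * Cy), by positivity, fun f hf p hp _ => ?_⟩
    calc
      f p.1 ≤ Cx * f x := (hp.1 f hf).2
      _ ≤ Cx * (C * f y) := mul_le_mul_of_nonneg_left (hxy f hf) hCx.le
      _ ≤ Cx * (C * (Cy * f p.2)) := by
        gcongr
        exact (hp.2 f hf).1
      _ = Cx * (C * Cy) * f p.2 := by ring

end ChainOfComparisons

section Harnack

variable {f : E → ℝ} {x y : E} {R : ℝ}

section MeanValueProperty

variable [MeasurableSpace E] [BorelSpace E]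

theorem integral_ballWeight_smul_sub_mul_eq (hf : HarmonicOnNhd f (closedBall x R)) (hR : 0 < R) :
    ∫ z, ballWeight (R⁻¹ • (z - x)) * f z =
      R ^ finrank ℝ E * (f x * ∫ y : E, ballWeight y) := by
  obtain ⟨g, hg, hgf⟩ := exists_contDiff_eventuallyEq_of_contDiffAt (n := 2) isClosed_closedBall
    fun y hy => (hf y hy).1
  have hΔ (y) (hy : y ∈ closedBall x R) : (Δ g) y = 0 :=
    ((harmonicAt_congr_nhds (hgf y hy)).2 (hf y hy)).2.self_of_nhds
  have hlocal (z : E) :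
      ballWeight (R⁻¹ • (z - x)) * f z = ballWeight (R⁻¹ • (z - x)) * g z := by
    rcases le_total R (dist z x) with hz | hz
    · simp only [ballWeight_smul_sub_of_le_dist hR hz, zero_mul]
    · rw [(hgf z hz).self_of_nhds]
  have hscale := Measure.integral_comp_inv_smul (volume : Measure E)
    (fun y => ballWeight y * g (x + R • y)) R
  simp only [smul_inv_smul₀ hR.ne'] at hscale
  rw [← (hgf x (mem_closedBall_self hR.le)).self_of_nhds, ← integral_ballWeight_mul_eq hg hR hΔ]
  calc
    ∫ z, ballWeight (R⁻¹ • (z - x)) * f z = ∫ z, ballWeight (R⁻¹ • z) * g (x + z) := by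
      simp only [hlocal]
      rw [← integral_add_left_eq_self _ x]
      simp only [add_sub_cancel_left]
    _ = _ := by rw [hscale, abs_of_pos (by positivity), smul_eq_mul]

theorem integrable_ballWeight_smul_sub_mul (hf : ContinuousOn f (closedBall x R)) (hR : 0 < R) :
    Integrable fun z => ballWeight (R⁻¹ • (z - x)) * f z := by
  have hcont : Continuous fun z => ballWeight (R⁻¹ • (z - x)) :=
    continuous_ballWeight.comp (by fun_prop)
  refine IntegrableOn.integrable_of_forall_notMem_eq_zero (s := closedBall x R)
    ((hcont.continuousOn.mul hf).integrableOn_compact (isCompact_closedBall x R)) fun z hz => ?_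
  rw [ballWeight_smul_sub_of_le_dist hR (not_le.1 hz).le, zero_mul]

end MeanValueProperty

theorem harnack_of_dist_le_half (hR : 0 < R) (hf : HarmonicOnNhd f (closedBall y (2 * R)))
    (hnonneg : ∀ z ∈ closedBall y (2 * R), 0 ≤ f z) (hxy : dist x y ≤ R / 2) :
    f x ≤ 3 * 2 ^ finrank ℝ E * f y := by
  borelize E
  have hsub : closedBall x R ⊆ closedBall y (2 * R) := closedBall_subset_closedBall' (by linarith)
  have hle : ∫ z, ballWeight (R⁻¹ • (z - x)) * f z ≤
      ∫ z, 3 * (ballWeight ((2 * R)⁻¹ • (z - y)) * f z) := by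
    refine integral_mono (integrable_ballWeight_smul_sub_mul (hf.mono hsub).continuousOn hR)
      ((integrable_ballWeight_smul_sub_mul hf.continuousOn (by positivity)).const_mul 3)
      fun z => ?_
    rcases le_total (2 * R) (dist z y) with hz | hz
    · have hz' : R ≤ dist z x := by linarith [dist_triangle z x y]
      simp only [ballWeight_smul_sub_of_le_dist hR hz', zero_mul,
        ballWeight_smul_sub_of_le_dist (by positivity : 0 < 2 * R) hz, mul_zero, le_refl]
    · rw [← mul_assoc]
      exact mul_le_mul_of_nonneg_right (ballWeight_le_three_mul hR hxy z) (hnonneg z hz)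
  rw [integral_const_mul, integral_ballWeight_smul_sub_mul_eq (hf.mono hsub) hR,
    integral_ballWeight_smul_sub_mul_eq hf (by positivity), mul_pow] at hle
  have hpos : 0 < R ^ finrank ℝ E * ∫ z : E, ballWeight z :=
    mul_pos (by positivity) integral_ballWeight_pos
  refine le_of_mul_le_mul_left ?_ hpos
  linarith

theorem exists_pos_eventually_harnack {Ω : Set E} (hΩ : Ω ∈ 𝓝 x) :
    ∃ C > 0, ∀ᶠ y in 𝓝 x, ∀ f : E → ℝ, HarmonicOnNhd f Ω → (∀ z ∈ Ω, 0 ≤ f z) →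
      f x ≤ C * f y ∧ f y ≤ C * f x := by
  obtain ⟨ρ, hρ, hball⟩ := nhds_basis_closedBall.mem_iff.1 hΩ
  refine ⟨3 * 2 ^ finrank ℝ E, by positivity, ?_⟩
  filter_upwards [closedBall_mem_nhds x (show 0 < ρ / 8 by positivity)] with y hy f hf hnonneg
  rw [mem_closedBall] at hy
  have hharnack (p q : E) (hp : dist p q ≤ ρ / 8) (hq : dist q x ≤ ρ / 8) :
      f p ≤ 3 * 2 ^ finrank ℝ E * f q := by
    have hsub : closedBall q (2 * (ρ / 4)) ⊆ Ω :=
      (closedBall_subset_closedBall' (by linarith)).trans hball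
    exact harnack_of_dist_le_half (by positivity) (hf.mono hsub)
      (fun z hz => hnonneg z (hsub hz)) (by linarith)
  exact ⟨hharnack x y (by rwa [dist_comm]) hy, hharnack y x hy (by rw [dist_self]; positivity)⟩

theorem exists_harnack_of_isCompact {Ω K : Set E} (hΩ : IsOpen Ω) (hΩc : IsPreconnected Ω)
    (hK : IsCompact K) (hKΩ : K ⊆ Ω) :
    ∃ C > 0, ∀ f : E → ℝ, HarmonicOnNhd f Ω → (∀ z ∈ Ω, 0 ≤ f z) →
      ∀ x ∈ K, ∀ y ∈ K, f x ≤ C * f y := by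
  obtain ⟨C, hC, h⟩ := exists_pos_forall_le_mul_of_isCompact
    (𝓕 := {f | HarmonicOnNhd f Ω ∧ ∀ z ∈ Ω, 0 ≤ f z}) hΩc (fun x hx => by
      obtain ⟨C, hC, h⟩ := exists_pos_eventually_harnack (hΩ.mem_nhds hx)
      exact ⟨C, hC, (h.mono fun y hy f hf => hy f hf.1 hf.2).filter_mono nhdsWithin_le_nhds⟩)
    hK hKΩ
  exact ⟨C, hC, fun f hf hnonneg x hx y hy =>
    h f ⟨hf, hnonneg⟩ x hx y hy (hnonneg y (hKΩ hy))⟩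

end Harnack

section MinimumPrinciple

variable [Nontrivial E] {f g : E → ℝ} {x : E}

theorem nonneg_of_isCompact_setOf_le_neg {Ω : Set E} (hΩ : IsOpen Ω) (hf : HarmonicOnNhd f Ω)
    (hcompact : ∀ ε > 0, IsCompact {z ∈ Ω | f z ≤ -ε}) (hx : x ∈ Ω) : 0 ≤ f x := by
  by_contra! hneg
  have hsublevel {c : ℝ} (hc : c < 0) : IsCompact {z ∈ Ω | f z ≤ c} := by
    simpa using hcompact (-c) (neg_pos.2 hc)
  obtain ⟨m, ⟨hmΩ, hmx⟩, hm⟩ := (hsublevel hneg).exists_isMinOn ⟨x, hx, le_rfl⟩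
    (hf.continuousOn.mono fun _ hz => hz.1)
  have hmin (z) (hz : z ∈ Ω) : f m ≤ f z :=
    (le_total (f z) (f x)).elim (fun hzx => hm ⟨hz, hzx⟩) hmx.trans
  have hcompact_min : IsCompact {z ∈ Ω | f z ≤ f m} := hsublevel (hmx.trans_lt hneg)
  have hopen_min : IsOpen {z ∈ Ω | f z ≤ f m} := by
    refine isOpen_iff_mem_nhds.2 fun z ⟨hzΩ, hzm⟩ => ?_
    obtain ⟨C, -, hharnack⟩ := exists_pos_eventually_harnack (hΩ.mem_nhds hzΩ)
    filter_upwards [hΩ.mem_nhds hzΩ, hharnack] with y hyΩ hy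
    have hle := (hy (f - fun _ => f m) (hf.sub (harmonicOnNhd_const _))
      fun z hz => sub_nonneg.2 (hmin z hz)).2
    simp only [Pi.sub_apply, hzm.antisymm (hmin z hzΩ), sub_self, mul_zero, sub_nonpos] at hle
    exact ⟨hyΩ, hle⟩
  have huniv := IsClopen.eq_univ ⟨hcompact_min.isClosed, hopen_min⟩ ⟨m, hmΩ, le_rfl⟩
  have := NormedSpace.noncompactSpace ℝ E
  exact noncompact_univ E (huniv ▸ hcompact_min)

theorem le_of_le_on_sphere_of_tendsto_cobounded {r a b : ℝ} (hf : HarmonicOnNhd f {z | r ≤ ‖z‖})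
    (hg : HarmonicOnNhd g {z | r ≤ ‖z‖}) (hfa : Tendsto f (cobounded E) (𝓝 a))
    (hgb : Tendsto g (cobounded E) (𝓝 b)) (hab : a ≤ b) (hle : ∀ z, ‖z‖ = r → f z ≤ g z)
    (hx : r ≤ ‖x‖) : f x ≤ g x := by
  rcases hx.eq_or_lt with hx | hx
  · exact hle x hx.symm
  refine sub_nonneg.1 (nonneg_of_isCompact_setOf_le_neg (f := g - f) (Ω := {z | r < ‖z‖})
    (isOpen_lt continuous_const continuous_norm) ((hg.sub hf).mono fun z (hz : r < ‖z‖) => hz.le)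
    (fun ε hε => ?_) hx)
  have hclosed : IsClosed ({z | r ≤ ‖z‖} ∩ (g - f) ⁻¹' Iic (-ε)) :=
    (hg.sub hf).continuousOn.preimage_isClosed_of_isClosed
      (isClosed_le continuous_const continuous_norm) isClosed_Iic
  have heq : {z ∈ {z | r < ‖z‖} | (g - f) z ≤ -ε} = {z | r ≤ ‖z‖} ∩ (g - f) ⁻¹' Iic (-ε) := by
    ext z
    refine and_congr_left fun (hgf : g z - f z ≤ -ε) => ⟨fun (hz : r < ‖z‖) => hz.le, fun hz => ?_⟩
    exact lt_of_le_of_ne (show r ≤ ‖z‖ from hz) fun hzr => by linarith [hle z hzr.symm]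
  rw [heq]
  refine isCompact_of_isClosed_isBounded hclosed (.subset (isBounded_def.2 ?_) inter_subset_right)
  filter_upwards [(hgb.sub hfa).eventually_const_lt (show -ε < b - a by linarith)] with z hz
  simpa using hz

end MinimumPrinciple

section PuncturedSpace

/-- The fundamental solution of the Laplace equation with pole at the origin, up to a multiplicative
constant, when `dim E ≥ 3`. -/
noncomputable def newtonKernel {E : Type*} [NormedAddCommGroup E] [NormedSpace ℝ E] (x : E) : ℝ :=
  ‖x‖ ^ (2 - finrank ℝ E : ℝ)

theorem newtonKernel_pos {E : Type*} [NormedAddCommGroup E] [NormedSpace ℝ E] {x : E}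
    (hx : x ≠ 0) : 0 < newtonKernel x :=
  Real.rpow_pos_of_pos (norm_pos_iff.2 hx) _

theorem tendsto_newtonKernel_cobounded {E : Type*} [NormedAddCommGroup E] [NormedSpace ℝ E]
    (hE : 2 < finrank ℝ E) : Tendsto (newtonKernel : E → ℝ) (cobounded E) (𝓝 0) := by
  have hE' : (0 : ℝ) < finrank ℝ E - 2 := sub_pos.2 (mod_cast hE)
  have h := (tendsto_rpow_neg_atTop hE').comp (tendsto_norm_cobounded_atTop (E := E))
  rwa [neg_sub] at h

theorem harmonicOnNhd_newtonKernel : HarmonicOnNhd (newtonKernel : E → ℝ) {0}ᶜ := by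
  refine fun x hx => ⟨(contDiffAt_norm ℝ hx).rpow_const_of_ne (norm_ne_zero_iff.2 hx), ?_⟩
  filter_upwards [isOpen_compl_singleton.mem_nhds hx] with y hy
  have hΔ : (Δ (newtonKernel : E → ℝ)) y = _ := laplacian_norm_rpow (2 - finrank ℝ E : ℝ) hy
  simp [hΔ]

theorem exists_harnack_on_spheres (hE : 1 < finrank ℝ E) :
    ∃ C > 0, ∀ f : E → ℝ, HarmonicOnNhd f {0}ᶜ → (∀ z ≠ 0, 0 ≤ f z) →
      ∀ x y : E, x ≠ 0 → ‖x‖ = ‖y‖ → f x ≤ C * f y := by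
  obtain ⟨C, hC, hsphere⟩ := exists_harnack_of_isCompact (E := E) (K := sphere 0 1)
    isOpen_compl_singleton (isConnected_compl_singleton_of_one_lt_rank
      (Module.one_lt_rank_of_one_lt_finrank hE) 0).isPreconnected
    (isCompact_sphere 0 1) (fun x hx => by rintro rfl; simp at hx)
  refine ⟨C, hC, fun f hf hnonneg x y hx hxy => ?_⟩
  have hr : ‖x‖ ≠ 0 := norm_ne_zero_iff.2 hx
  have hmem (z : E) (hz : ‖x‖ = ‖z‖) : ‖x‖⁻¹ • z ∈ sphere (0 : E) 1 := by
    simp [norm_smul, ← hz, hr]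
  have hdilate := hsphere (fun z => f (‖x‖ • z))
    (fun z hz => harmonicAt_comp_const_smul (hf _ (smul_ne_zero hr hz)))
    (fun z hz => hnonneg _ (smul_ne_zero hr hz)) _ (hmem x rfl) _ (hmem y hxy)
  simpa only [smul_inv_smul₀ hr] using hdilate

theorem exists_mul_newtonKernel_le_mul_newtonKernel (hE : 2 < finrank ℝ E) :
    ∃ C > 0, ∀ f : E → ℝ, HarmonicOnNhd f {0}ᶜ → (∀ z ≠ 0, 0 ≤ f z) →
      Tendsto f (cobounded E) (𝓝 0) →
      ∀ x y : E, x ≠ 0 → y ≠ 0 → f y * newtonKernel x ≤ C * f x * newtonKernel y := by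
  have : Nontrivial E := Module.nontrivial_of_finrank_pos (R := ℝ) (by omega)
  obtain ⟨C, hC, hsphere⟩ := exists_harnack_on_spheres (E := E) (by omega)
  refine ⟨C, hC, fun f hf hnonneg hlim x y hx hy => ?_⟩
  have hexterior {p : E} (hp : p ≠ 0) : {z : E | ‖p‖ ≤ ‖z‖} ⊆ {0}ᶜ := fun z hz =>
    norm_pos_iff.1 ((norm_pos_iff.2 hp).trans_le hz)
  have hharm (c : ℝ) {p : E} (hp : p ≠ 0) := (hf.const_smul (c := c)).mono (hexterior hp)
  have hharmG (c : ℝ) {p : E} (hp : p ≠ 0) :=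
    (harmonicOnNhd_newtonKernel.const_smul (c := c)).mono (hexterior hp)
  have hzero (c : ℝ) : Tendsto (c • f) (cobounded E) (𝓝 0) := by
    simpa [Pi.smul_def] using hlim.const_mul c
  have hzeroG (c : ℝ) : Tendsto (c • newtonKernel : E → ℝ) (cobounded E) (𝓝 0) := by
    simpa [Pi.smul_def] using (tendsto_newtonKernel_cobounded hE).const_mul c
  have hradial {p z : E} (hz : ‖z‖ = ‖p‖) : newtonKernel z = newtonKernel p := by
    simp only [newtonKernel, hz]
  rcases le_total ‖x‖ ‖y‖ with hxy | hyx
  · rw [mul_comm]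
    refine le_of_le_on_sphere_of_tendsto_cobounded (hharm (newtonKernel x) hx)
      (hharmG (C * f x) hx) (hzero _) (hzeroG _) le_rfl (fun z hz => ?_) hxy
    have hz0 : z ≠ 0 := hexterior hx hz.ge
    rw [Pi.smul_apply, Pi.smul_apply, smul_eq_mul, smul_eq_mul, hradial hz, mul_comm]
    exact mul_le_mul_of_nonneg_right (hsphere f hf hnonneg z x hz0 hz) (newtonKernel_pos hx).le
  · rw [mul_right_comm]
    refine le_of_le_on_sphere_of_tendsto_cobounded (hharmG (f y) hy)
      (hharm (C * newtonKernel y) hy) (hzeroG _) (hzero _) le_rfl (fun z hz => ?_) hyx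
    rw [Pi.smul_apply, Pi.smul_apply, smul_eq_mul, smul_eq_mul, hradial hz, mul_right_comm]
    exact mul_le_mul_of_nonneg_right (hsphere f hf hnonneg y z hy hz.symm)
      (newtonKernel_pos hy).le

theorem le_of_bddBelow_of_tendsto_cobounded (hE : 2 < finrank ℝ E) {f : E → ℝ} {ℓ : ℝ}
    (hf : HarmonicOnNhd f {0}ᶜ) (hbdd : BddBelow (f '' {0}ᶜ))
    (hlim : Tendsto f (cobounded E) (𝓝 ℓ)) {x : E} (hx : x ≠ 0) : ℓ ≤ f x := by
  have : Nontrivial E := Module.nontrivial_of_finrank_pos (R := ℝ) (by omega)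
  obtain ⟨c, hc⟩ := hbdd
  have hbarrier (r : ℝ) (hr : r ∈ Ioo 0 ‖x‖) :
      ℓ + (c - ℓ) * r ^ (finrank ℝ E - 2 : ℝ) * newtonKernel x ≤ f x := by
    have hexterior : {z : E | r ≤ ‖z‖} ⊆ {0}ᶜ := fun z hz => norm_pos_iff.1 (hr.1.trans_le hz)
    have hlimG : Tendsto (fun z : E => ℓ + (c - ℓ) * r ^ (finrank ℝ E - 2 : ℝ) * newtonKernel z)
        (cobounded E) (𝓝 ℓ) := by
      simpa using ((tendsto_newtonKernel_cobounded hE).const_mul _).const_add ℓ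
    refine le_of_le_on_sphere_of_tendsto_cobounded
      (((harmonicOnNhd_const ℓ).add harmonicOnNhd_newtonKernel.const_smul).mono hexterior)
      (hf.mono hexterior) hlimG hlim le_rfl (fun z hz => ?_) hr.2.le
    have hcancel : r ^ (finrank ℝ E - 2 : ℝ) * newtonKernel z = 1 := by
      rw [newtonKernel, hz, ← Real.rpow_add hr.1, sub_add_sub_cancel', sub_self, Real.rpow_zero]
    simp only [Pi.add_apply, Pi.smul_apply, smul_eq_mul, mul_assoc, hcancel, mul_one,
      add_sub_cancel]
    exact hc (mem_image_of_mem f (hexterior hz.ge))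
  have hpow : Tendsto (fun r : ℝ => r ^ (finrank ℝ E - 2 : ℝ)) (𝓝[>] 0) (𝓝 0) := by
    have hexp : (0 : ℝ) < finrank ℝ E - 2 := sub_pos.2 (mod_cast hE)
    simpa [hexp.ne'] using
      ((Real.continuous_rpow_const hexp.le).tendsto 0).mono_left nhdsWithin_le_nhds
  refine le_of_tendsto (x := 𝓝[>] (0 : ℝ)) ?_
    (eventually_of_mem (Ioo_mem_nhdsGT (norm_pos_iff.2 hx)) hbarrier)
  simpa using ((hpow.const_mul (c - ℓ)).mul_const (newtonKernel x)).const_add ℓ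

theorem exists_eq_mul_newtonKernel_of_nonneg (hE : 2 < finrank ℝ E) {f : E → ℝ}
    (hf : HarmonicOnNhd f {0}ᶜ) (hnonneg : ∀ z ≠ 0, 0 ≤ f z)
    (hlim : Tendsto f (cobounded E) (𝓝 0)) :
    ∃ b : ℝ, 0 ≤ b ∧ ∀ x ≠ 0, f x = b * newtonKernel x := by
  have : Nontrivial E := Module.nontrivial_of_finrank_pos (R := ℝ) (by omega)
  let ratios := (fun x => f x / newtonKernel x) '' {0}ᶜ
  have hratios : ratios.Nonempty := (nonempty_compl_of_nontrivial (0 : E)).image _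
  have hratio_nonneg : 0 ∈ lowerBounds ratios := by
    rintro _ ⟨x, hx, rfl⟩
    exact div_nonneg (hnonneg x hx) (newtonKernel_pos hx).le
  let w := f - sInf ratios • newtonKernel
  have hw : HarmonicOnNhd w {0}ᶜ := hf.sub harmonicOnNhd_newtonKernel.const_smul
  have hw_nonneg (x) (hx : x ≠ 0) : 0 ≤ w x :=
    sub_nonneg.2 ((le_div_iff₀ (newtonKernel_pos hx)).1
      (csInf_le ⟨0, hratio_nonneg⟩ (mem_image_of_mem _ hx)))
  have hw_lim : Tendsto w (cobounded E) (𝓝 0) := by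
    simpa [w, Pi.sub_def] using
      hlim.sub ((tendsto_newtonKernel_cobounded hE).const_smul (sInf ratios))
  obtain ⟨C, hC, hcomparable⟩ := exists_mul_newtonKernel_le_mul_newtonKernel hE
  refine ⟨sInf ratios, le_csInf hratios hratio_nonneg, fun y hy => ?_⟩
  have hGy := newtonKernel_pos hy
  have hlower : sInf ratios + w y / (C * newtonKernel y) ≤ sInf ratios := by
    refine le_csInf hratios ?_
    rintro _ ⟨x, hx, rfl⟩
    have hGx := newtonKernel_pos hx
    have hw_ratio : w y / (C * newtonKernel y) ≤ w x / newtonKernel x := by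
      rw [div_le_div_iff₀ (mul_pos hC hGy) hGx]
      linarith [hcomparable w hw hw_nonneg hw_lim x y hx hy]
    calc
      sInf ratios + w y / (C * newtonKernel y) ≤ sInf ratios + w x / newtonKernel x := by gcongr
      _ = f x / newtonKernel x := by
        simp only [w, Pi.sub_apply, Pi.smul_apply, smul_eq_mul]
        field_simp
        ring
  have hwy : w y ≤ 0 := by
    simpa using (div_le_iff₀ (mul_pos hC hGy)).1 (add_le_iff_nonpos_right _ |>.1 hlower)
  exact sub_eq_zero.1 (hwy.antisymm (hw_nonneg y hy))

theorem positive_harmonic_punctured_classification_general (hE : 3 ≤ finrank ℝ E) {f : E → ℝ}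
    {ℓ : ℝ} (hf : HarmonicOnNhd f {0}ᶜ) (hbdd : BddBelow (f '' {0}ᶜ))
    (hlim : Tendsto f (cobounded E) (𝓝 ℓ)) :
    ∃ b : ℝ, 0 ≤ b ∧ ∀ x : E, x ≠ 0 → f x = ℓ + b * ‖x‖ ^ (2 - finrank ℝ E : ℝ) := by
  obtain ⟨b, hb, h⟩ := exists_eq_mul_newtonKernel_of_nonneg hE
    (hf.sub (harmonicOnNhd_const ℓ))
    (fun z hz => sub_nonneg.2 (le_of_bddBelow_of_tendsto_cobounded hE hf hbdd hlim hz))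
    (by simpa [Pi.sub_def] using hlim.sub_const ℓ)
  exact ⟨b, hb, fun x hx => eq_add_of_sub_eq' (h x hx)⟩

end PuncturedSpace

end

/-- a positive harmonic function on `ℝⁿ ∖ {0}`, `n ≥ 3`, tending to `1`
at infinity is of the form `U(x) = 1 + b·‖x‖^{2-n}` with `b ≥ 0`. -/
theorem positive_harmonic_punctured_classification
    (n : ℕ) (hn : 3 ≤ n)
    (U : EuclideanSpace ℝ (Fin n) → ℝ)
    (hpos : ∀ x : EuclideanSpace ℝ (Fin n), x ≠ 0 → 0 < U x)
    (hharm : HarmonicOnSet U {(0 : EuclideanSpace ℝ (Fin n))}ᶜ)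
    (hlim : Tendsto U (comap (fun x : EuclideanSpace ℝ (Fin n) => ‖x‖) atTop)
      (nhds 1)) :
    ∃ b : ℝ, 0 ≤ b ∧ ∀ x : EuclideanSpace ℝ (Fin n), x ≠ 0 →
      U x = 1 + b * ‖x‖ ^ ((2 : ℝ) - n) := by
  simpa using positive_harmonic_punctured_classification_general (by simpa using hn)
    (hharm.harmonicOnNhd isOpen_compl_singleton)
    ⟨0, by rintro _ ⟨x, hx, rfl⟩; exact (hpos x hx).le⟩ (by rwa [← comap_norm_atTop])
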